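/- Let Ŵ = {(p,q) ∈ ℕ² : (p ∈ Γ or q ∈ Γ), p < q, and p, q are coprime}. Then the limit as N → ∞ of #(Ŵ ∩ [1,N]²)/N² exists and equals 4/(3π²). -/

import Mathlib

open Filter Topology

/-- `Γ = {(2k-1)·2^{2ℓ-1} : k, ℓ ∈ ℕ_{>0}}`. -/
def Gamma : Set ℕ := {m | ∃ k l : ℕ, 0 < k ∧ 0 < l ∧ m = (2*k-1) * 2^(2*l-1)}

/-- `Ŵ = {(p,q) ∈ ℕ² : p ∈ Γ or q ∈ Γ, p < q, p and q coprime}`. -/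
def What : Set (ℕ × ℕ) :=
  {pq | (pq.1 ∈ Gamma ∨ pq.2 ∈ Gamma) ∧ pq.1 < pq.2 ∧ Nat.Coprime pq.1 pq.2}

/-!
Every element of `Γ` is even, so a coprime pair with an entry in `Γ` has exactly one such entry and
its other entry is odd; forgetting the order identifies `Ŵ` with the coprime pairs in `Γ × odds`.

Up to `0`, `Γ` is the double of its complement, so its counting function satisfies
`c(n) = ⌊n/2⌋ - c(⌊n/2⌋)`, which forces density `1/3`. Both `Γ` and the odd numbers are
invariant under multiplication by odd `d`, so the pairs of `Γ × odds` divisible by an odd `d` have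
density `1/(6d²)`, and there are none for even `d`. Möbius inversion over the common divisor `d`,
with dominated convergence against `∑ 1/d²`, gives the density
`1/6 · ∑_{d odd} μ(d)/d² = 1/6 · 6/π² · (1 - 1/4)⁻¹`.
-/

open Finset
open scoped ArithmeticFunction.Moebius

section Density

open scoped Classical in
/-- The positive elements of `S` that are at most `n`. -/
noncomputable def upTo (S : Set ℕ) (n : ℕ) : Finset ℕ := {m ∈ Ioc 0 n | m ∈ S}

/-- `S` has natural density `δ`; whether `0 ∈ S` is immaterial. -/
def HasDensity (S : Set ℕ) (δ : ℝ) : Prop :=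
  Tendsto (fun n : ℕ ↦ (#(upTo S n) : ℝ) / n) atTop (𝓝 δ)

variable {S : Set ℕ} {δ : ℝ} {d m n : ℕ}

lemma mem_upTo : m ∈ upTo S n ↔ (0 < m ∧ m ≤ n) ∧ m ∈ S := by
  simp only [upTo, mem_filter, mem_Ioc]

lemma card_upTo_add_card_upTo_compl (S : Set ℕ) (n : ℕ) : #(upTo S n) + #(upTo Sᶜ n) = n := by
  classical
  simpa [upTo] using card_filter_add_card_filter_not (s := Ioc 0 n) (· ∈ S)

lemma card_upTo_image_mul (S : Set ℕ) (hd : d ≠ 0) (n : ℕ) :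
    #(upTo ((d * ·) '' S) n) = #(upTo S (n / d)) := by
  have hd_pos : 0 < d := Nat.pos_of_ne_zero hd
  have himage : upTo ((d * ·) '' S) n = (upTo S (n / d)).image (d * ·) := by
    ext m
    simp only [mem_image, mem_upTo, Set.mem_image, Nat.le_div_iff_mul_le hd_pos]
    constructor
    · rintro ⟨⟨hpos, hle⟩, k, hk, rfl⟩
      exact ⟨k, ⟨⟨Nat.pos_of_mul_pos_left hpos, by rwa [mul_comm]⟩, hk⟩, rfl⟩
    · rintro ⟨k, ⟨⟨hpos, hle⟩, hk⟩, rfl⟩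
      exact ⟨⟨Nat.mul_pos hd_pos hpos, by rwa [mul_comm]⟩, k, hk, rfl⟩
  rw [himage, card_image_of_injective _ (mul_right_injective₀ hd)]

lemma tendsto_natCast_div_div_self (d : ℕ) :
    Tendsto (fun n : ℕ ↦ ((n / d : ℕ) : ℝ) / n) atTop (𝓝 (1 / d)) := by
  refine ((tendsto_nat_floor_mul_div_atTop (R := ℝ) (a := 1 / d) (by positivity)).comp
    tendsto_natCast_atTop_atTop).congr fun n ↦ ?_
  simp only [Function.comp_apply]
  rw [one_div_mul_eq_div, Nat.floor_div_natCast, Nat.floor_natCast]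

lemma hasDensity_univ : HasDensity Set.univ 1 := by
  refine tendsto_const_nhds.congr' ?_
  filter_upwards [eventually_ne_atTop 0] with n hn
  have hn' : (n : ℝ) ≠ 0 := mod_cast hn
  simp [upTo, hn']

namespace HasDensity

lemma compl (h : HasDensity S δ) : HasDensity Sᶜ (1 - δ) := by
  refine (tendsto_const_nhds.sub h).congr' ?_
  filter_upwards [eventually_ne_atTop 0] with n hn
  have hn' : (n : ℝ) ≠ 0 := mod_cast hn
  have hcard : (#(upTo S n) : ℝ) + #(upTo Sᶜ n) = n := mod_cast card_upTo_add_card_upTo_compl S n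
  field_simp
  linarith

lemma image_mul (h : HasDensity S δ) (hd : d ≠ 0) : HasDensity ((d * ·) '' S) (δ / d) := by
  have hdiv : Tendsto (· / d) atTop atTop := Nat.tendsto_div_const_atTop hd
  rw [HasDensity, ← mul_one_div]
  refine ((h.comp hdiv).mul (tendsto_natCast_div_div_self d)).congr' ?_
  filter_upwards [hdiv.eventually_ne_atTop 0] with n hn
  have hn' : ((n / d : ℕ) : ℝ) ≠ 0 := mod_cast hn
  simp only [Function.comp_apply, card_upTo_image_mul S hd]
  exact div_mul_div_cancel₀ hn'

lemma sep_dvd (h : HasDensity S δ) (hd : d ≠ 0) (hS : ∀ k, d * k ∈ S ↔ k ∈ S) :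
    HasDensity {n ∈ S | d ∣ n} (δ / d) := by
  have himage : {n ∈ S | d ∣ n} = (d * ·) '' S := by
    ext n
    constructor
    · rintro ⟨hn, k, rfl⟩
      exact ⟨k, (hS k).1 hn, rfl⟩
    · rintro ⟨k, hk, rfl⟩
      exact ⟨(hS k).2 hk, dvd_mul_right d k⟩
  exact himage ▸ h.image_mul hd

end HasDensity

lemma hasDensity_odd : HasDensity {n | Odd n} (1 / 2) := by
  have hodd : {n : ℕ | Odd n} = ((2 * ·) '' Set.univ)ᶜ := by
    ext n
    simp [← Nat.not_even_iff_odd, even_iff_exists_two_mul]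
  have h := (hasDensity_univ.image_mul two_ne_zero).compl
  rw [← hodd] at h
  convert h using 1
  norm_num

end Density

section AlternatingDilation

variable {S : Set ℕ} {b : ℕ}

lemma card_upTo_add_card_upTo_div (hb : b ≠ 0) (hS : ∀ n ≠ 0, n ∈ S ↔ n ∈ (b * ·) '' Sᶜ) (n : ℕ) :
    #(upTo S n) + #(upTo S (n / b)) = n / b := by
  have hupTo : upTo S n = upTo ((b * ·) '' Sᶜ) n := by
    ext m
    rw [mem_upTo, mem_upTo]
    exact and_congr_right fun hm ↦ hS m hm.1.ne'
  rw [hupTo, card_upTo_image_mul _ hb, add_comm, card_upTo_add_card_upTo_compl]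

lemma abs_card_upTo_sub_le_add_one (hb : b ≠ 0) (hS : ∀ n ≠ 0, n ∈ S ↔ n ∈ (b * ·) '' Sᶜ)
    (n : ℕ) : |(#(upTo S n) : ℝ) - n / (b + 1)|
      ≤ |(#(upTo S (n / b)) : ℝ) - (n / b : ℕ) / (b + 1)| + 1 := by
  have hrec : (#(upTo S n) : ℝ) + #(upTo S (n / b)) = (n / b : ℕ) :=
    mod_cast card_upTo_add_card_upTo_div hb hS n
  have hn : (b : ℝ) * (n / b : ℕ) + (n % b : ℕ) = n := mod_cast Nat.div_add_mod n b
  have herror : (#(upTo S n) : ℝ) - n / (b + 1)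
      = -(#(upTo S (n / b)) - (n / b : ℕ) / (b + 1)) - (n % b : ℕ) / (b + 1) := by
    field_simp
    linear_combination (b + 1) * hrec + hn
  have hmod : |((n % b : ℕ) : ℝ) / (b + 1)| ≤ 1 := by
    rw [abs_of_nonneg (by positivity), div_le_one (by positivity)]
    exact_mod_cast (Nat.mod_lt n (Nat.pos_of_ne_zero hb)).le.trans b.le_succ
  rw [herror]
  exact (abs_sub _ _).trans (by rw [abs_neg]; gcongr)

lemma abs_card_upTo_sub_le_log (hb : 1 < b) (hS : ∀ n ≠ 0, n ∈ S ↔ n ∈ (b * ·) '' Sᶜ) (n : ℕ) :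
    |(#(upTo S n) : ℝ) - n / (b + 1)| ≤ Nat.log b n + 1 := by
  induction n using Nat.strong_induction_on with
  | _ n ih =>
    have hstep := abs_card_upTo_sub_le_add_one (by lia) hS n
    rcases lt_or_ge n b with hlt | hge
    · simpa [Nat.div_eq_of_lt hlt, Nat.log_of_lt hlt, upTo] using hstep
    · have hlog : (Nat.log b n : ℝ) = Nat.log b (n / b) + 1 :=
        mod_cast Nat.log_of_one_lt_of_le hb hge
      rw [hlog]
      exact hstep.trans (by gcongr; exact ih _ (Nat.div_lt_self (by lia) hb))

lemma tendsto_natLog_add_one_div (b : ℕ) :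
    Tendsto (fun n : ℕ ↦ ((Nat.log b n : ℝ) + 1) / n) atTop (𝓝 0) := by
  have hlog : Tendsto (fun n : ℕ ↦ Real.log n / n) atTop (𝓝 0) :=
    Real.isLittleO_log_id_atTop.tendsto_div_nhds_zero.comp tendsto_natCast_atTop_atTop
  have hbound := (hlog.div_const (Real.log b)).add tendsto_inv_atTop_nhds_zero_nat
  rw [zero_div, zero_add] at hbound
  refine squeeze_zero (fun n ↦ by positivity) (fun n ↦ ?_) hbound
  calc ((Nat.log b n : ℝ) + 1) / n ≤ (Real.logb b n + 1) / n := by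
        gcongr
        exact Real.natLog_le_logb n b
    _ = Real.log n / n / Real.log b + (n : ℝ)⁻¹ := by
        rw [Real.logb]
        ring

theorem hasDensity_of_eq_image_mul_compl (hb : 1 < b)
    (hS : ∀ n ≠ 0, n ∈ S ↔ n ∈ (b * ·) '' Sᶜ) : HasDensity S (1 / (b + 1)) := by
  rw [HasDensity, tendsto_iff_norm_sub_tendsto_zero]
  refine squeeze_zero' (.of_forall fun _ ↦ norm_nonneg _) ?_ (tendsto_natLog_add_one_div b)
  filter_upwards [eventually_gt_atTop 0] with n hn
  have hn' : (0 : ℝ) < n := mod_cast hn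
  have herror : (#(upTo S n) : ℝ) / n - 1 / (b + 1) = (#(upTo S n) - n / (b + 1)) / n := by
    field_simp
  rw [herror, Real.norm_eq_abs, abs_div, abs_of_pos hn']
  gcongr
  exact abs_card_upTo_sub_le_log hb hS n

end AlternatingDilation

section Gamma

lemma mem_Gamma_iff {m : ℕ} : m ∈ Gamma ↔ Odd (padicValNat 2 m) := by
  have hval {e t : ℕ} (ht : Odd t) : padicValNat 2 (t * 2 ^ e) = e := by
    rw [padicValNat.mul ht.pos.ne' (by positivity), padicValNat.prime_pow,
      padicValNat.eq_zero_of_not_dvd ht.not_two_dvd_nat, zero_add]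
  constructor
  · rintro ⟨k, l, hk, hl, rfl⟩
    rw [hval ⟨k - 1, by lia⟩]
    exact ⟨l - 1, by lia⟩
  · intro hodd
    have hm : m ≠ 0 := by
      rintro rfl
      simp at hodd
    obtain ⟨e, t, ht, rfl⟩ := Nat.exists_eq_two_pow_mul_odd hm
    rw [mul_comm, hval ht] at hodd
    obtain ⟨s, rfl⟩ := ht
    obtain ⟨j, rfl⟩ := hodd
    exact ⟨s + 1, j + 1, s.succ_pos, j.succ_pos, mul_comm _ _⟩

lemma even_of_mem_Gamma {m : ℕ} (hm : m ∈ Gamma) : Even m := by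
  obtain ⟨k, l, -, hl, rfl⟩ := hm
  exact (even_two.pow_of_ne_zero (by lia)).mul_left _

lemma mul_mem_Gamma_iff {d : ℕ} (hd : Odd d) (m : ℕ) : d * m ∈ Gamma ↔ m ∈ Gamma := by
  rcases eq_or_ne m 0 with rfl | hm
  · rw [mul_zero]
  · rw [mem_Gamma_iff, mem_Gamma_iff, padicValNat.mul hd.pos.ne' hm,
      padicValNat.eq_zero_of_not_dvd hd.not_two_dvd_nat, zero_add]

lemma two_mul_mem_Gamma_iff {m : ℕ} (hm : m ≠ 0) : 2 * m ∈ Gamma ↔ m ∉ Gamma := by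
  rw [mem_Gamma_iff, mem_Gamma_iff, padicValNat.mul two_ne_zero hm,
    padicValNat.self one_lt_two, add_comm, Nat.odd_add_one]

lemma mem_Gamma_iff_mem_image_two_mul_compl {m : ℕ} (hm : m ≠ 0) :
    m ∈ Gamma ↔ m ∈ (2 * ·) '' Gammaᶜ := by
  constructor
  · intro hmem
    obtain ⟨k, rfl⟩ := (even_of_mem_Gamma hmem).two_dvd
    exact ⟨k, (two_mul_mem_Gamma_iff (by lia)).1 hmem, rfl⟩
  · rintro ⟨k, hk, rfl⟩
    exact (two_mul_mem_Gamma_iff (right_ne_zero_of_mul hm)).2 hk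

lemma hasDensity_Gamma : HasDensity Gamma (1 / 3) := by
  convert hasDensity_of_eq_image_mul_compl one_lt_two
    fun m hm ↦ mem_Gamma_iff_mem_image_two_mul_compl hm using 1
  norm_num

end Gamma

section PairDensity

open scoped Classical in
/-- The pairs in `P` with both entries in `[1, N]`. -/
noncomputable def pairsUpTo (P : Set (ℕ × ℕ)) (N : ℕ) : Finset (ℕ × ℕ) :=
  {pq ∈ Ioc 0 N ×ˢ Ioc 0 N | pq ∈ P}

/-- `P` has density `δ` in the plane, measured along the squares `[1, N]²`. -/
def HasPairDensity (P : Set (ℕ × ℕ)) (δ : ℝ) : Prop :=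
  Tendsto (fun N : ℕ ↦ (#(pairsUpTo P N) : ℝ) / (N : ℝ) ^ 2) atTop (𝓝 δ)

variable {P : Set (ℕ × ℕ)} {A B : Set ℕ} {α β : ℝ}

lemma mem_pairsUpTo {N : ℕ} {pq : ℕ × ℕ} :
    pq ∈ pairsUpTo P N ↔ ((0 < pq.1 ∧ pq.1 ≤ N) ∧ 0 < pq.2 ∧ pq.2 ≤ N) ∧ pq ∈ P := by
  simp only [pairsUpTo, mem_filter, mem_product, mem_Ioc]

lemma pairsUpTo_prod (A B : Set ℕ) (N : ℕ) : pairsUpTo (A ×ˢ B) N = upTo A N ×ˢ upTo B N := by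
  ext pq
  simp only [mem_pairsUpTo, mem_product, mem_upTo, Set.mem_prod]
  tauto

lemma hasPairDensity_empty : HasPairDensity ∅ 0 := by
  simp [HasPairDensity, pairsUpTo]

lemma HasDensity.prod (hA : HasDensity A α) (hB : HasDensity B β) :
    HasPairDensity (A ×ˢ B) (α * β) := by
  refine (Tendsto.mul hA hB).congr fun N ↦ ?_
  rw [pairsUpTo_prod, card_product, Nat.cast_mul, div_mul_div_comm, sq]

lemma card_pairsUpTo_lt_or_swap (hP : ∀ pq ∈ P, pq.swap ∉ P) (N : ℕ) :
    #(pairsUpTo {pq | pq.1 < pq.2 ∧ (pq ∈ P ∨ pq.swap ∈ P)} N) = #(pairsUpTo P N) := by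
  classical
  refine card_nbij' (fun pq ↦ if pq ∈ P then pq else pq.swap)
    (fun pq ↦ if pq.1 < pq.2 then pq else pq.swap) ?_ ?_ ?_ ?_ <;>
  · rintro ⟨p, q⟩ hpq
    grind [mem_pairsUpTo, Prod.swap_prod_mk, hP (p, q)]

lemma HasPairDensity.lt_or_swap {δ : ℝ} (h : HasPairDensity P δ) (hP : ∀ pq ∈ P, pq.swap ∉ P) :
    HasPairDensity {pq | pq.1 < pq.2 ∧ (pq ∈ P ∨ pq.swap ∈ P)} δ := by
  simpa only [HasPairDensity, card_pairsUpTo_lt_or_swap hP] using h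

end PairDensity

section CoprimePairs

variable {P : Set (ℕ × ℕ)} {A B : Set ℕ} {α β : ℝ}

lemma card_pairsUpTo_sep_dvd_gcd_le (P : Set (ℕ × ℕ)) (d N : ℕ) :
    #(pairsUpTo {pq ∈ P | d ∣ pq.1.gcd pq.2} N) ≤ (N / d) ^ 2 := by
  calc #(pairsUpTo {pq ∈ P | d ∣ pq.1.gcd pq.2} N)
      ≤ #({p ∈ Ioc 0 N | d ∣ p} ×ˢ {q ∈ Ioc 0 N | d ∣ q}) := by
        refine card_le_card fun pq hpq ↦ ?_
        obtain ⟨⟨hp, hq⟩, -, hdvd⟩ := mem_pairsUpTo.1 hpq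
        simp only [mem_product, mem_filter, mem_Ioc]
        exact ⟨⟨hp, (Nat.dvd_gcd_iff.1 hdvd).1⟩, hq, (Nat.dvd_gcd_iff.1 hdvd).2⟩
    _ = (N / d) ^ 2 := by
        rw [card_product, Nat.Ioc_filter_dvd_card_eq_div, sq]

lemma sum_moebius_dvd_gcd {p q N : ℕ} (hp : 0 < p ∧ p ≤ N) :
    ∑ d ∈ Ioc 0 N with d ∣ p.gcd q, μ d = if p.Coprime q then 1 else 0 := by
  have hdivisors : {d ∈ Ioc 0 N | d ∣ p.gcd q} = (p.gcd q).divisors := by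
    have hgcd : 0 < p.gcd q := Nat.gcd_pos_of_pos_left q hp.1
    ext d
    simp only [mem_filter, mem_Ioc, Nat.mem_divisors]
    refine ⟨fun h ↦ ⟨h.2, hgcd.ne'⟩, fun h ↦ ⟨⟨Nat.pos_of_dvd_of_pos h.1 hgcd, ?_⟩, h.1⟩⟩
    exact (Nat.le_of_dvd hp.1 (h.1.trans (Nat.gcd_dvd_left p q))).trans hp.2
  rw [hdivisors, ← ArithmeticFunction.coe_zeta_mul_apply, ArithmeticFunction.coe_zeta_mul_moebius,
    ArithmeticFunction.one_apply]

lemma card_pairsUpTo_sep_coprime (P : Set (ℕ × ℕ)) (N : ℕ) :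
    (#(pairsUpTo {pq ∈ P | pq.1.Coprime pq.2} N) : ℤ)
      = ∑ d ∈ Ioc 0 N, μ d * #(pairsUpTo {pq ∈ P | d ∣ pq.1.gcd pq.2} N) := by
  have hfilter (R : ℕ × ℕ → Prop) [DecidablePred R] :
      pairsUpTo {pq ∈ P | R pq} N = {pq ∈ pairsUpTo P N | R pq} := by
    ext pq
    simp only [mem_pairsUpTo, mem_filter, Set.mem_sep_iff, and_assoc]
  calc (#(pairsUpTo {pq ∈ P | pq.1.Coprime pq.2} N) : ℤ)
      = ∑ pq ∈ pairsUpTo P N, if pq.1.Coprime pq.2 then 1 else 0 := by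
        rw [hfilter, natCast_card_filter]
    _ = ∑ pq ∈ pairsUpTo P N, ∑ d ∈ Ioc 0 N, if d ∣ pq.1.gcd pq.2 then μ d else 0 := by
        refine sum_congr rfl fun pq hpq ↦ ?_
        rw [← sum_filter, sum_moebius_dvd_gcd (mem_pairsUpTo.1 hpq).1.1]
    _ = ∑ d ∈ Ioc 0 N, μ d * #(pairsUpTo {pq ∈ P | d ∣ pq.1.gcd pq.2} N) := by
        rw [sum_comm]
        refine sum_congr rfl fun d _ ↦ ?_
        rw [hfilter, natCast_card_filter, mul_sum]
        simp only [mul_ite, mul_one, mul_zero]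

lemma card_pairsUpTo_sep_coprime_div_sq (P : Set (ℕ × ℕ)) (N : ℕ) :
    (#(pairsUpTo {pq ∈ P | pq.1.Coprime pq.2} N) : ℝ) / (N : ℝ) ^ 2
      = ∑' d : ℕ, μ d * (#(pairsUpTo {pq ∈ P | d ∣ pq.1.gcd pq.2} N) / (N : ℝ) ^ 2) := by
  have hzero : ∀ d ∉ Ioc 0 N,
      (μ d : ℝ) * (#(pairsUpTo {pq ∈ P | d ∣ pq.1.gcd pq.2} N) / (N : ℝ) ^ 2) = 0 := by
    intro d hd
    have hdiv : N / d = 0 := by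
      rw [Nat.div_eq_zero_iff]
      simp only [mem_Ioc] at hd
      lia
    have hcard := card_pairsUpTo_sep_dvd_gcd_le P d N
    rw [hdiv, zero_pow two_ne_zero, Nat.le_zero] at hcard
    rw [hcard, Nat.cast_zero, zero_div, mul_zero]
  have hcount := congrArg (Int.cast : ℤ → ℝ) (card_pairsUpTo_sep_coprime P N)
  push_cast at hcount
  rw [tsum_eq_sum hzero, hcount, sum_div]
  exact sum_congr rfl fun d _ ↦ mul_div_assoc _ _ _

theorem HasPairDensity.sep_coprime {δ : ℕ → ℝ}
    (h : ∀ d ≠ 0, HasPairDensity {pq ∈ P | d ∣ pq.1.gcd pq.2} (δ d)) :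
    HasPairDensity {pq ∈ P | pq.1.Coprime pq.2} (∑' d, μ d * δ d) := by
  simp only [HasPairDensity, card_pairsUpTo_sep_coprime_div_sq]
  refine tendsto_tsum_of_dominated_convergence hasSum_zeta_two.summable (fun d ↦ ?_) ?_
  · rcases eq_or_ne d 0 with rfl | hd
    · simp
    · exact (h d hd).const_mul _
  · filter_upwards [eventually_ne_atTop 0] with N hN d
    have hmu : |(μ d : ℝ)| ≤ 1 := mod_cast ArithmeticFunction.abs_moebius_le_one
    have hcard : (#(pairsUpTo {pq ∈ P | d ∣ pq.1.gcd pq.2} N) : ℝ) ≤ (N / d : ℝ) ^ 2 :=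
      calc (#(pairsUpTo {pq ∈ P | d ∣ pq.1.gcd pq.2} N) : ℝ) ≤ ((N / d : ℕ) : ℝ) ^ 2 :=
            mod_cast card_pairsUpTo_sep_dvd_gcd_le P d N
        _ ≤ (N / d : ℝ) ^ 2 := by
            gcongr
            exact Nat.cast_div_le
    rw [norm_mul, Real.norm_eq_abs, Real.norm_of_nonneg (by positivity)]
    calc |(μ d : ℝ)| * (#(pairsUpTo {pq ∈ P | d ∣ pq.1.gcd pq.2} N) / (N : ℝ) ^ 2)
        ≤ 1 * ((N / d : ℝ) ^ 2 / (N : ℝ) ^ 2) := by gcongr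
      _ = 1 / (d : ℝ) ^ 2 := by
          rw [one_mul, ← div_pow, div_div_cancel_left' (Nat.cast_ne_zero.2 hN), inv_pow, one_div]

lemma LSeries_trivChar_mul_moebius_two (m : ℕ) [NeZero m] :
    LSeries ((fun d : ℕ ↦ (1 : DirichletCharacter ℂ m) d) * fun d ↦ (μ d : ℂ)) 2
      = 6 / Real.pi ^ 2 * ∏ p ∈ m.primeFactors, (1 - 1 / (p : ℂ) ^ 2)⁻¹ := by
  have hinv := DirichletCharacter.LSeries.mul_mu_eq_one (1 : DirichletCharacter ℂ m) (s := 2)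
    (by norm_num)
  have hchar : LSeries (fun d : ℕ ↦ (1 : DirichletCharacter ℂ m) d) 2
      = (∏ p ∈ m.primeFactors, (1 - 1 / (p : ℂ) ^ 2)) * (Real.pi ^ 2 / 6) := by
    rw [← DirichletCharacter.LFunction_eq_LSeries _ (by norm_num), ← riemannZeta_two]
    convert DirichletCharacter.LFunctionTrivChar_eq_mul_riemannZeta (N := m) (s := 2)
      (by norm_num) using 4 with p
    rw [Complex.cpow_neg, Complex.cpow_ofNat, one_div]
  rw [eq_inv_of_mul_eq_one_right hinv, hchar, mul_inv_rev, inv_div, prod_inv_distrib]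

lemma hasSum_moebius_div_sq_of_coprime (m : ℕ) [NeZero m] :
    HasSum (fun d : ℕ ↦ if d.Coprime m then (μ d : ℝ) / (d : ℝ) ^ 2 else 0)
      (6 / Real.pi ^ 2 * ∏ p ∈ m.primeFactors, (1 - 1 / (p : ℝ) ^ 2)⁻¹) := by
  have hsummable := DirichletCharacter.LSeriesSummable_mul (1 : DirichletCharacter ℂ m)
    ((ArithmeticFunction.LSeriesSummable_moebius_iff (s := 2)).2 (by norm_num))
  have hsum := hsummable.LSeriesHasSum
  rw [LSeriesHasSum, LSeries_trivChar_mul_moebius_two] at hsum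
  rw [← Complex.hasSum_ofReal]
  push_cast
  convert hsum using 2 with d
  rcases eq_or_ne d 0 with rfl | hd
  · simp
  · rw [LSeries.term_of_ne_zero hd, Pi.mul_apply]
    split_ifs with hdm
    · simp [MulChar.one_apply ((ZMod.isUnit_iff_coprime d m).2 hdm)]
    · simp [MulChar.map_nonunit _ (mt (ZMod.isUnit_iff_coprime d m).1 hdm)]

theorem hasPairDensity_prod_sep_coprime {m : ℕ} [NeZero m]
    (hA : HasDensity A α) (hB : HasDensity B β)
    (hAmul : ∀ d, d.Coprime m → ∀ k, d * k ∈ A ↔ k ∈ A)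
    (hBmul : ∀ d, d.Coprime m → ∀ k, d * k ∈ B ↔ k ∈ B)
    (hBm : ∀ b ∈ B, b.Coprime m) :
    HasPairDensity {pq ∈ A ×ˢ B | pq.1.Coprime pq.2}
      (α * β * (6 / Real.pi ^ 2 * ∏ p ∈ m.primeFactors, (1 - 1 / (p : ℝ) ^ 2)⁻¹)) := by
  have hmultiples (d : ℕ) (hd : d ≠ 0) : HasPairDensity {pq ∈ A ×ˢ B | d ∣ pq.1.gcd pq.2}
      (if d.Coprime m then α / d * (β / d) else 0) := by
    split_ifs with hdm
    · convert (hA.sep_dvd hd (hAmul d hdm)).prod (hB.sep_dvd hd (hBmul d hdm)) using 1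
      ext pq
      simp only [Set.mem_prod, Nat.dvd_gcd_iff, Set.mem_ofPred_eq]
      exact and_and_and_comm
    · convert hasPairDensity_empty
      refine Set.eq_empty_of_forall_notMem fun pq hpq ↦ hdm ?_
      exact (hBm pq.2 hpq.1.2).coprime_dvd_left (hpq.2.trans (Nat.gcd_dvd_right _ _))
  convert HasPairDensity.sep_coprime hmultiples using 1
  rw [← ((hasSum_moebius_div_sq_of_coprime m).mul_left (α * β)).tsum_eq]
  refine tsum_congr fun d ↦ ?_
  split_ifs <;> ring

end CoprimePairs

section What

lemma odd_of_coprime_of_mem_Gamma {p q : ℕ} (hp : p ∈ Gamma) (hpq : p.Coprime q) : Odd q :=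
  Nat.coprime_two_left.1 (hpq.coprime_dvd_left (even_of_mem_Gamma hp).two_dvd)

/-- The coprime pairs in `Γ × odds`; `Ŵ` consists of these pairs, sorted increasingly. -/
def coprimeGammaOdd : Set (ℕ × ℕ) := {pq ∈ Gamma ×ˢ {q | Odd q} | pq.1.Coprime pq.2}

lemma What_eq_lt_or_swap :
    What = {pq | pq.1 < pq.2 ∧ (pq ∈ coprimeGammaOdd ∨ pq.swap ∈ coprimeGammaOdd)} := by
  ext ⟨p, q⟩
  constructor
  · rintro ⟨hp | hq, hlt, hpq⟩
    · exact ⟨hlt, .inl ⟨⟨hp, odd_of_coprime_of_mem_Gamma hp hpq⟩, hpq⟩⟩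
    · exact ⟨hlt, .inr ⟨⟨hq, odd_of_coprime_of_mem_Gamma hq hpq.symm⟩, hpq.symm⟩⟩
  · rintro ⟨hlt, ⟨⟨hp, -⟩, hpq⟩ | ⟨⟨hq, -⟩, hqp⟩⟩
    · exact ⟨.inl hp, hlt, hpq⟩
    · exact ⟨.inr hq, hlt, hqp.symm⟩

lemma swap_notMem_coprimeGammaOdd : ∀ pq ∈ coprimeGammaOdd, pq.swap ∉ coprimeGammaOdd := by
  rintro ⟨p, q⟩ ⟨⟨hp, -⟩, -⟩ ⟨⟨-, hp_odd⟩, -⟩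
  exact Nat.not_even_iff_odd.2 hp_odd (even_of_mem_Gamma hp)

lemma hasPairDensity_coprimeGammaOdd :
    HasPairDensity coprimeGammaOdd (4 / (3 * Real.pi ^ 2)) := by
  have hvalue : 4 / (3 * Real.pi ^ 2) = 1 / 3 * (1 / 2) *
      (6 / Real.pi ^ 2 * ∏ p ∈ Nat.primeFactors 2, (1 - 1 / (p : ℝ) ^ 2)⁻¹) := by
    rw [Nat.prime_two.primeFactors, prod_singleton]
    push_cast
    field_simp
    norm_num
  rw [hvalue]
  exact hasPairDensity_prod_sep_coprime hasDensity_Gamma hasDensity_odd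
    (fun d hd ↦ mul_mem_Gamma_iff (Nat.coprime_two_right.1 hd))
    (fun d hd k ↦ by simp [Nat.odd_mul, Nat.coprime_two_right.1 hd])
    (fun q hq ↦ Nat.coprime_two_right.2 hq)

lemma hasPairDensity_What : HasPairDensity What (4 / (3 * Real.pi ^ 2)) := by
  rw [What_eq_lt_or_swap]
  exact hasPairDensity_coprimeGammaOdd.lt_or_swap swap_notMem_coprimeGammaOdd

end What

theorem density_What :
    Tendsto (fun N : ℕ =>
        ((What ∩ {pq : ℕ × ℕ | pq.1 ∈ Set.Icc 1 N ∧ pq.2 ∈ Set.Icc 1 N}).ncard : ℝ)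
          / (N : ℝ)^2)
      atTop (𝓝 (4 / (3 * Real.pi^2))) := by
  refine hasPairDensity_What.congr fun N ↦ ?_
  rw [← Set.ncard_coe_finset]
  congr 3
  ext pq
  rw [mem_coe, mem_pairsUpTo, and_comm]
  rfl
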